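/- arXiv:2203.06336 — 2 statements merged into one kernel-verified Lean document; each statement's English description precedes it below -/
import Mathlib

section
/- Let s be a prime power, let a, c, e ∈ GF(s)^{n1}, and let b, d, f ∈ GF(s)^{n1·n2} be partitioned into consecutive blocks of length n2: b_1,…,b_{n1}; d_1,…,d_{n1}; f_1,…,f_{n1}. Suppose b = d = 0 (the zero vector), every block f_i is balanced, and the n1×2 matrix (a, c) is an OA(n1, 2, s, 2). Then the (n1·n2)×3 matrix (a⊛b, c⊛d, e⊛f) is an OA(n1·n2, 3, s, 3). -/
open Finset

/-- `M` (rows indexed by `R`, columns by `C`, entries in the finite field `F` with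
`s = Fintype.card F` elements) is an orthogonal array of strength `t`: for any choice of `t`
distinct columns and any `t`-tuple of symbols, the number of rows showing that tuple, times
`s ^ t`, equals the number of rows (i.e. each tuple appears exactly `(card R) / s ^ t` times). -/
def IsOA {R C F : Type*} [Fintype R] [Fintype F] [DecidableEq F]
    (M : R → C → F) (t : ℕ) : Prop :=
  ∀ cols : Fin t → C, Function.Injective cols → ∀ v : Fin t → F,
    (Finset.univ.filter fun r : R => ∀ j, M r (cols j) = v j).card
      * Fintype.card F ^ t = Fintype.card R

/-- A vector over `F` is balanced if every symbol of `F` occurs equally often among its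
entries. -/
def IsBalanced {R F : Type*} [Fintype R] [Fintype F] [DecidableEq F] (v : R → F) : Prop :=
  ∀ x : F, (Finset.univ.filter fun r : R => v r = x).card * Fintype.card F = Fintype.card R

/-- `M` is a difference scheme: for any two distinct columns, the vector of entrywise
differences contains every element of `F` equally often. -/
def IsDiffScheme {R C F : Type*} [Fintype R] [Field F] [Fintype F] [DecidableEq F]
    (M : R → C → F) : Prop :=
  ∀ j j' : C, j ≠ j' → ∀ x : F,
    (Finset.univ.filter fun r : R => M r j - M r j' = x).card * Fintype.card F
      = Fintype.card R

/-!
In an array with exactly `t` columns, orthogonality of strength `t` does not depend on the order of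
the columns: it says that all rows occur equally often. The columns of `a` and `c` are constant on
the blocks, so all pairs of symbols are shown by equally many blocks. Inside a block the last column
is a translate of a balanced vector, hence balanced, so the pair shown by that block is extended
equally often to each of the triples starting with it.
-/

section

variable {R S C F : Type*} [Fintype R] [Fintype F] [DecidableEq F]

theorem IsBalanced.const_add [AddGroup F] {v : R → F} (hv : IsBalanced v) (x : F) :
    IsBalanced fun r => x + v r := by
  intro y
  simpa only [eq_neg_add_iff_add_eq] using hv (-x + y)

theorem isOA_iff_card_filter_eq [Fintype C] {t : ℕ} (hC : Fintype.card C = t) {M : R → C → F} :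
    IsOA M t ↔ ∀ v : C → F, #{r | M r = v} * Fintype.card F ^ t = Fintype.card R := by
  constructor
  · intro hM v
    let σ : Fin t ≃ C := (Fintype.equivFinOfCardEq hC).symm
    have row_eq_iff (r : R) : (∀ j, M r (σ j) = v (σ j)) ↔ M r = v := by
      rw [σ.forall_congr_right (q := fun k => M r k = v k), funext_iff]
    simpa only [Function.comp_apply, row_eq_iff] using hM σ σ.injective (v ∘ σ)
  · intro hM cols hcols v
    have cols_bijective : Function.Bijective cols :=
      (Fintype.bijective_iff_injective_and_card cols).2 ⟨hcols, by rw [Fintype.card_fin, hC]⟩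
    let σ : Fin t ≃ C := Equiv.ofBijective cols cols_bijective
    have row_eq_iff (r : R) : M r = v ∘ σ.symm ↔ ∀ j, M r (cols j) = v j := by
      rw [σ.eq_comp_symm, funext_iff]
      rfl
    simpa only [row_eq_iff] using hM (v ∘ σ.symm)

theorem card_filter_fst_and [Fintype S] (P : R → Prop) [DecidablePred P]
    (Q : R → S → Prop) [∀ i, DecidablePred (Q i)] :
    #{p : R × S | P p.1 ∧ Q p.1 p.2} = ∑ i with P i, #{j | Q i j} := by
  simp only [card_filter, Fintype.sum_prod_type, ite_and, sum_filter, sum_ite_irrel, sum_const_zero]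

theorem IsOA.snoc [Fintype S] {t : ℕ} {M : R → Fin t → F} {g : R → S → F}
    (hM : IsOA M t) (hg : ∀ i, IsBalanced (g i)) :
    IsOA (fun p : R × S => (Fin.snoc (M p.1) (g p.1 p.2) : Fin (t + 1) → F)) (t + 1) := by
  rw [isOA_iff_card_filter_eq (Fintype.card_fin _)] at hM ⊢
  intro v
  have snoc_eq_iff (p : R × S) : (Fin.snoc (M p.1) (g p.1 p.2) : Fin (t + 1) → F) = v ↔
      M p.1 = Fin.init v ∧ g p.1 p.2 = v (Fin.last t) := by
    rw [← Fin.snoc_init_self v, Fin.snoc_inj, Fin.init_snoc, Fin.snoc_last]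
  calc #{p : R × S | (Fin.snoc (M p.1) (g p.1 p.2) : Fin (t + 1) → F) = v}
        * Fintype.card F ^ (t + 1)
      = (∑ i with M i = Fin.init v, #{j | g i j = v (Fin.last t)} * Fintype.card F)
          * Fintype.card F ^ t := by
        simp only [snoc_eq_iff]
        rw [card_filter_fst_and (fun i => M i = Fin.init v) (fun i j => g i j = v (Fin.last t)),
          pow_succ', ← mul_assoc, sum_mul]
    _ = #{i | M i = Fin.init v} * Fintype.card S * Fintype.card F ^ t := by
        rw [sum_congr rfl fun i _ => hg i (v (Fin.last t)), sum_const, smul_eq_mul]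
    _ = Fintype.card (R × S) := by
        rw [mul_right_comm, hM, Fintype.card_prod]

theorem statement6_general [AddGroup F] [Fintype S] {t : ℕ}
    (A : R → Fin t → F) (e : R → F) (f : R → S → F)
    (hf : ∀ i, IsBalanced (f i)) (hA : IsOA A t) :
    IsOA (fun p : R × S =>
      (Fin.snoc (A p.1) (e p.1 + f p.1 p.2) : Fin (t + 1) → F)) (t + 1) :=
  hA.snoc fun i => (hf i).const_add (e i)

end

/-- Lemma 3(iv). -/
theorem statement6 {F : Type} [Field F] [Fintype F] [DecidableEq F]
    {n1 n2 : ℕ}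
    (a c e : Fin n1 → F) (b d f : Fin n1 → Fin n2 → F)
    (hb : ∀ i j, b i j = 0) (hd : ∀ i j, d i j = 0)
    (hf : ∀ i : Fin n1, IsBalanced (f i))
    (hac : IsOA (fun i : Fin n1 => ![a i, c i]) 2) :
    IsOA (fun p : Fin n1 × Fin n2 =>
      ![a p.1 + b p.1 p.2, c p.1 + d p.1 p.2, e p.1 + f p.1 p.2]) 3 := by
  simp only [hb, hd, add_zero]
  convert statement6_general _ e f hf hac using 2 with p
  ext k
  fin_cases k <;> rfl
end

section
/- Let s be a prime power. Let A be an OA(s^2, 2, s, 2), and for i = 1,…,s^2 let B_i be an OA(n2, m2, s, 2) if m2 = 2 or an OA(n2, m2, s, 3) if m2 ≥ 3. Then: (i) for every pair 1 ≤ g ≠ g' ≤ s−1, the (s^2·n2)×(4·m2) matrix (D_g, D_{g'}) is an OA(s^2·n2, 4·m2, s, 3); and (ii) for every 1 ≤ g ≤ s−1, the (s^2·n2)×(3·m2) matrix (D_g, D_s) is an OA(s^2·n2, 3·m2, s, 3). -/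
open Finset

/-!
Call a map between finite types balanced if all its fibres have the same size. A map `f` into `Fᵗ`
is balanced as soon as each of its nontrivial linear combinations is: for fixed `v`, count the pairs
of a row `r` and a coefficient vector `c` with `c · f r = c · v` in two ways. Hence an array has
strength `t` if every nontrivial combination of at most `t` of its columns is balanced. The converse
holds for an array with at least `t` columns; one with `m < t` columns has that property if its
strength is `m`, which is why strength `min t m` is asked of `A` and of the `Bᵢ`.

A combination `c` of columns of the constructed array is `α · A + β · B`. It is balanced if `β ≠ 0`,
because it is then balanced on each block, and also if `β = 0 ≠ α`. It remains to see that
`α = β = 0` forces `c = 0` when `c` has at most three nonzero entries. In such a `c` every column of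
`A` or `B` that is involved at all is involved at least twice, so two columns of `A`, or of `B`,
would require four entries: the support of `c` lies over at most one column of each.
-/

namespace IsBalanced

variable {R S V F : Type*} [Fintype R] [Fintype S]

lemma comp [Fintype V] [DecidableEq V] [Fintype F] [DecidableEq F] {f : R → V} {φ : V → F}
    (hφ : IsBalanced φ) (hf : IsBalanced f) : IsBalanced (φ ∘ f) := by
  intro x
  rcases isEmpty_or_nonempty R with hR | ⟨⟨r⟩⟩
  · simp
  have hV : 0 < Fintype.card V := Fintype.card_pos_iff.mpr ⟨f r⟩
  have fiber_card : #{r | φ (f r) = x} = ∑ v with φ v = x, #{r | f r = v} := by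
    rw [card_eq_sum_card_fiberwise (f := f) (t := {v | φ v = x}) (fun r hr => by simpa using hr)]
    refine sum_congr rfl fun v hv => ?_
    rw [filter_filter]
    congr 1
    grind
  apply Nat.eq_of_mul_eq_mul_right hV
  calc #{r | φ (f r) = x} * Fintype.card F * Fintype.card V
      = (∑ v with φ v = x, #{r | f r = v} * Fintype.card V) * Fintype.card F := by
        rw [fiber_card, ← sum_mul]; ring
    _ = #{v | φ v = x} * Fintype.card F * Fintype.card R := by
        simp only [hf _, sum_const, smul_eq_mul]; ring
    _ = Fintype.card R * Fintype.card V := by rw [hφ x, mul_comm]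

lemma of_surjective {G H : Type*} [AddGroup G] [AddGroup H] [Fintype G] [Fintype H]
    [DecidableEq H] {f : G →+ H} (hf : Function.Surjective f) : IsBalanced f := by
  intro x
  calc #{g | f g = x} * Fintype.card H
      = ∑ y : H, #{g | f g = y} := by
        rw [sum_congr rfl fun y _ => AddMonoidHom.card_fiber_eq_of_mem_range f (hf y) (hf x)]
        simp [mul_comm]
    _ = Fintype.card G := (card_eq_sum_card_fiberwise (fun _ _ => by simp)).symm

lemma comp_fst [Fintype F] [DecidableEq F] {f : R → F} (hf : IsBalanced f) :
    IsBalanced fun p : R × S => f p.1 := by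
  intro x
  rw [card_filter, Fintype.sum_prod_type_right]
  simp only [← card_filter, sum_const, card_univ, smul_eq_mul, Fintype.card_prod]
  rw [mul_assoc, hf x, mul_comm]

lemma of_prod [Fintype F] [DecidableEq F] {f : R → S → F} (hf : ∀ r, IsBalanced (f r)) :
    IsBalanced fun p : R × S => f p.1 p.2 := by
  intro x
  rw [card_filter, Fintype.sum_prod_type, sum_mul]
  simp only [← card_filter, hf _ x, sum_const, card_univ, smul_eq_mul, Fintype.card_prod]

lemma const_add_s12 [Fintype F] [DecidableEq F] [AddGroup F] {f : R → F} (hf : IsBalanced f) (a : F) :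
    IsBalanced fun r => a + f r := by
  intro x
  simpa only [eq_neg_add_iff_add_eq] using hf (-a + x)

end IsBalanced

lemma isOA_iff_isBalanced {R C F : Type*} [Fintype R] [Fintype F] [DecidableEq F]
    {M : R → C → F} {t : ℕ} :
    IsOA M t ↔ ∀ cols : Fin t → C, Function.Injective cols → IsBalanced fun r => M r ∘ cols := by
  simp [IsOA, IsBalanced, funext_iff]

section LinearCombinations

variable {R C F ι : Type*} [Fintype R] [Fintype C] [Fintype ι]
  [Field F] [Fintype F] [DecidableEq F]

lemma isBalanced_dotProduct_of_ne_zero [DecidableEq ι] {c : ι → F} (hc : c ≠ 0) :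
    IsBalanced (c ⬝ᵥ · : (ι → F) → F) := by
  obtain ⟨i, hi⟩ := Function.ne_iff.mp hc
  let φ : (ι → F) →+ F := AddMonoidHom.mk' (c ⬝ᵥ ·) (dotProduct_add c)
  have hφ : Function.Surjective φ := fun x =>
    ⟨Pi.single i ((c i)⁻¹ * x), by simpa [φ] using mul_inv_cancel_left₀ hi x⟩
  exact IsBalanced.of_surjective hφ

lemma sum_card_rows_dotProduct_eq_mul_card [DecidableEq ι] {f : R → ι → F}
    (hf : ∀ c : ι → F, c ≠ 0 → IsBalanced fun r => c ⬝ᵥ f r) (v : ι → F) :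
    (∑ c : ι → F, #{r | c ⬝ᵥ f r = c ⬝ᵥ v}) * Fintype.card F
      = Fintype.card R * (Fintype.card F - 1) + Fintype.card (ι → F) * Fintype.card R := by
  have hF : Fintype.card F - 1 + 1 = Fintype.card F := Nat.sub_add_cancel Fintype.card_pos
  have card_mul (c : ι → F) : #{r | c ⬝ᵥ f r = c ⬝ᵥ v} * Fintype.card F
      = (if c = 0 then Fintype.card R * (Fintype.card F - 1) else 0) + Fintype.card R := by
    split_ifs with hc
    · subst hc
      simp [← mul_add_one, hF]
    · rw [hf c hc, zero_add]
  rw [sum_mul, sum_congr rfl fun c _ => card_mul c]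
  simp [sum_add_distrib]

lemma sum_card_coeffs_dotProduct_eq_mul_card [DecidableEq ι] (f : R → ι → F) (v : ι → F) :
    (∑ r, #{c : ι → F | c ⬝ᵥ f r = c ⬝ᵥ v}) * Fintype.card F
      = #{r | f r = v} * (Fintype.card (ι → F) * (Fintype.card F - 1))
        + Fintype.card R * Fintype.card (ι → F) := by
  have hF : Fintype.card F - 1 + 1 = Fintype.card F := Nat.sub_add_cancel Fintype.card_pos
  have card_mul (r : R) : #{c : ι → F | c ⬝ᵥ f r = c ⬝ᵥ v} * Fintype.card F
      = (if f r = v then Fintype.card (ι → F) * (Fintype.card F - 1) else 0)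
        + Fintype.card (ι → F) := by
    split_ifs with hr
    · simp [hr, ← mul_add_one, hF]
    · simpa [dotProduct_comm, sub_eq_zero] using
        isBalanced_dotProduct_of_ne_zero (sub_ne_zero.mpr hr) 0
  rw [sum_mul, sum_congr rfl fun r _ => card_mul r]
  simp [sum_add_distrib, ← sum_filter]

theorem isBalanced_of_forall_dotProduct [DecidableEq ι] {f : R → ι → F}
    (hf : ∀ c : ι → F, c ≠ 0 → IsBalanced fun r => c ⬝ᵥ f r) : IsBalanced f := by
  intro v
  have double_count : ∑ c : ι → F, #{r | c ⬝ᵥ f r = c ⬝ᵥ v}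
      = ∑ r, #{c : ι → F | c ⬝ᵥ f r = c ⬝ᵥ v} := by
    simp only [card_filter]
    exact sum_comm
  have hF : 0 < Fintype.card F - 1 := Nat.sub_pos_of_lt Fintype.one_lt_card
  apply Nat.eq_of_mul_eq_mul_right hF
  have count_eq := sum_card_rows_dotProduct_eq_mul_card hf v
  rw [double_count, sum_card_coeffs_dotProduct_eq_mul_card] at count_eq
  linarith

theorem IsOA.isBalanced_dotProduct {M : R → C → F} {t : ℕ}
    (hM : IsOA M (min t (Fintype.card C))) {c : C → F} (hc : c ≠ 0) (hct : hammingNorm c ≤ t) :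
    IsBalanced fun r => c ⬝ᵥ M r := by
  classical
  obtain ⟨s, hs, hst⟩ := exists_superset_card_eq (s := {j | c j ≠ 0})
    (le_min hct hammingNorm_le_card_fintype) (min_le_right _ _)
  let cols : Fin (min t (Fintype.card C)) → C := fun i => (s.equivFinOfCardEq hst).symm i
  have hcols : Function.Injective cols := Subtype.val_injective.comp (Equiv.injective _)
  have supp_subset_range {j : C} (hj : c j ≠ 0) : j ∈ Set.range cols :=
    ⟨s.equivFinOfCardEq hst ⟨j, hs (by simpa using hj)⟩, by simp [cols]⟩
  have hc_cols : c ∘ cols ≠ 0 := by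
    obtain ⟨j, hj⟩ := Function.ne_iff.mp hc
    obtain ⟨i, rfl⟩ := supp_subset_range hj
    exact Function.ne_iff.mpr ⟨i, hj⟩
  have dot_eq (r : R) : c ⬝ᵥ M r = (c ∘ cols) ⬝ᵥ (M r ∘ cols) :=
    (Fintype.sum_of_injective cols hcols _ _
      (fun j hj => by rw [not_imp_comm.mp supp_subset_range hj, zero_mul]) fun _ => rfl).symm
  simp only [dot_eq]
  exact (isBalanced_dotProduct_of_ne_zero hc_cols).comp (isOA_iff_isBalanced.mp hM cols hcols)

theorem isOA_of_isBalanced_dotProduct {M : R → C → F} {t : ℕ}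
    (h : ∀ c : C → F, c ≠ 0 → hammingNorm c ≤ t → IsBalanced fun r => c ⬝ᵥ M r) : IsOA M t := by
  classical
  refine isOA_iff_isBalanced.mpr fun cols hcols => isBalanced_of_forall_dotProduct fun d hd => ?_
  let c : C → F := Function.extend cols d 0
  have hc_cols (i : Fin t) : c (cols i) = d i := hcols.extend_apply _ _ i
  have hc_range (j : C) (hj : j ∉ Set.range cols) : c j = 0 := Function.extend_apply' _ _ j hj
  have hc : c ≠ 0 := by
    obtain ⟨i, hi⟩ := Function.ne_iff.mp hd
    exact Function.ne_iff.mpr ⟨cols i, by rwa [hc_cols]⟩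
  have hct : hammingNorm c ≤ t := by
    calc hammingNorm c ≤ #(univ.image cols) := card_le_card fun j hj => by
          have : j ∈ Set.range cols := not_imp_comm.mp (hc_range j) (by simpa using hj)
          simpa using this
      _ ≤ t := card_image_le.trans (by simp)
  have dot_eq (r : R) : d ⬝ᵥ (M r ∘ cols) = c ⬝ᵥ M r :=
    Fintype.sum_of_injective cols hcols _ _ (fun j hj => by rw [hc_range j hj, zero_mul])
      fun i => by rw [hc_cols, Function.comp_apply]
  simpa only [dot_eq] using h c hc hct

end LinearCombinations

section MonomialRows

open Matrix

variable {C K F : Type*} [Fintype C] [NonUnitalNonAssocSemiring F]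

lemma exists_ne_of_vecMul_eq_zero [NoZeroDivisors F] {U : Matrix C K F} {c : C → F}
    (h : c ᵥ* U = 0) {i : C} {k : K} (hc : c i ≠ 0) (hU : U i k ≠ 0) :
    ∃ j ≠ i, c j ≠ 0 ∧ U j k ≠ 0 := by
  by_contra! hj
  have hsum : ∑ j, c j * U j k = c i * U i k := Fintype.sum_eq_single i fun j hji => by
    by_cases hcj : c j = 0
    · rw [hcj, zero_mul]
    · rw [hj j hji hcj, mul_zero]
  exact mul_ne_zero hc hU (hsum.symm.trans (congrFun h k))

variable [Fintype K] [DecidableEq F]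

lemma hammingNorm_vecMul_le {U : Matrix C K F} (hU : ∀ i, hammingNorm (U i) ≤ 1) (c : C → F) :
    hammingNorm (c ᵥ* U) ≤ hammingNorm c := by
  classical
  calc hammingNorm (c ᵥ* U)
      ≤ #(({i | c i ≠ 0} : Finset C).biUnion fun i => {k | U i k ≠ 0}) := by
        refine card_le_card fun k hk => ?_
        obtain ⟨i, -, hi⟩ := exists_ne_zero_of_sum_ne_zero (mem_filter.mp hk).2
        simpa using ⟨i, left_ne_zero_of_mul hi, right_ne_zero_of_mul hi⟩
    _ ≤ hammingNorm c * 1 := card_biUnion_le_card_mul _ _ _ fun i _ => hU i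
    _ = hammingNorm c := mul_one _

lemma column_eq_of_vecMul_eq_zero [NoZeroDivisors F] {U : Matrix C K F}
    (hU : ∀ i, hammingNorm (U i) ≤ 1) {c : C → F} (h : c ᵥ* U = 0)
    (hc3 : hammingNorm c ≤ 3) {i j : C} {k l : K}
    (hci : c i ≠ 0) (hik : U i k ≠ 0) (hcj : c j ≠ 0) (hjl : U j l ≠ 0) : k = l := by
  classical
  by_contra hkl
  have row_ne {x y : C} (hx : U x k ≠ 0) (hy : U y l ≠ 0) : x ≠ y := by
    rintro rfl
    exact hkl (card_le_one.mp (hU x) k (by simpa using hx) l (by simpa using hy))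
  obtain ⟨i', hi', hci', hi'k⟩ := exists_ne_of_vecMul_eq_zero h hci hik
  obtain ⟨j', hj', hcj', hj'l⟩ := exists_ne_of_vecMul_eq_zero h hcj hjl
  have four_le : 4 ≤ hammingNorm c := by
    calc 4 = #{i, i', j, j'} := by grind
      _ ≤ hammingNorm c := card_le_card (by simp [insert_subset_iff, *])
  omega

end MonomialRows

section Superposition

open Matrix

variable {R S C K L F : Type*} [Fintype R] [Fintype S] [Fintype C] [Fintype K] [Fintype L]
  [Field F] [Fintype F] [DecidableEq F]

theorem isOA_mulVec_add_mulVec {t : ℕ} {A : R → K → F} {B : R → S → L → F}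
    (hA : IsOA A (min t (Fintype.card K))) (hB : ∀ r, IsOA (B r) (min t (Fintype.card L)))
    {U : Matrix C K F} {W : Matrix C L F}
    (hU : ∀ i, hammingNorm (U i) ≤ 1) (hW : ∀ i, hammingNorm (W i) ≤ 1)
    (hUW : ∀ c : C → F, hammingNorm c ≤ t → c ᵥ* U = 0 → c ᵥ* W = 0 → c = 0) :
    IsOA (fun p : R × S => U *ᵥ A p.1 + W *ᵥ B p.1 p.2) t := by
  refine isOA_of_isBalanced_dotProduct fun c hc hct => ?_
  simp only [dotProduct_add, dotProduct_mulVec]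
  by_cases hcW : c ᵥ* W = 0
  · have hcU : c ᵥ* U ≠ 0 := fun hcU => hc (hUW c hct hcU hcW)
    simp only [hcW, zero_dotProduct, add_zero]
    exact (hA.isBalanced_dotProduct hcU ((hammingNorm_vecMul_le hU c).trans hct)).comp_fst
  · refine IsBalanced.of_prod (f := fun r s => (c ᵥ* U) ⬝ᵥ A r + (c ᵥ* W) ⬝ᵥ B r s) fun r => ?_
    exact ((hB r).isBalanced_dotProduct hcW ((hammingNorm_vecMul_le hW c).trans hct)).const_add_s12 _

end Superposition

/-- The matrix of the linear map `w ↦ (a i * w (f i))ᵢ`: its row `i` has the entry `a i` in column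
`f i` and zeros elsewhere. It describes an array each of whose columns is a multiple of a column of
a given array. -/
def selectionMatrix {C K F : Type*} [DecidableEq K] [Zero F] (f : C → K) (a : C → F) :
    Matrix C K F :=
  Matrix.of fun i => Pi.single (f i) (a i)

namespace selectionMatrix

open Matrix

variable {C K F : Type*} [DecidableEq K] (f : C → K)

lemma apply_self [Zero F] (a : C → F) (i : C) : selectionMatrix f a i (f i) = a i :=
  Pi.single_eq_same _ _

lemma eq_of_apply_ne_zero [Zero F] {a : C → F} {i : C} {k : K}
    (h : selectionMatrix f a i k ≠ 0) : f i = k := by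
  by_contra hk
  exact h (Pi.single_eq_of_ne' hk _)

lemma hammingNorm_row_le_one [Zero F] [Fintype K] [DecidableEq F] (a : C → F) (i : C) :
    hammingNorm (selectionMatrix f a i) ≤ 1 :=
  card_le_one.mpr fun k hk l hl => (eq_of_apply_ne_zero f (by simpa using hk)).symm.trans
    (eq_of_apply_ne_zero f (by simpa using hl))

lemma mulVec_apply [NonUnitalNonAssocSemiring F] [Fintype K] (a : C → F) (w : K → F) (i : C) :
    (selectionMatrix f a *ᵥ w) i = a i * w (f i) :=
  single_dotProduct _ _ _

end selectionMatrix

section Juxtaposition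

open Matrix

variable {K L F : Type*} [Fintype K] [Fintype L] [DecidableEq K] [DecidableEq L]
  [DecidableEq F]

lemma eq_zero_of_vecMul_selectionMatrix_eq_zero [CommRing F] [IsDomain F]
    {g g' : F} (hg : g ≠ 0) (hg' : g' ≠ 0) (hgg' : g ≠ g')
    {c : (K × L) ⊕ (K × L) → F} (hc : hammingNorm c ≤ 3)
    (hU : c ᵥ* selectionMatrix (Sum.elim Prod.fst Prod.fst) 1 = 0)
    (hW : c ᵥ* selectionMatrix (Sum.elim Prod.snd Prod.snd)
      (Sum.elim (fun _ => g) (fun _ => g')) = 0) : c = 0 := by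
  set k : (K × L) ⊕ (K × L) → K := Sum.elim Prod.fst Prod.fst
  set l : (K × L) ⊕ (K × L) → L := Sum.elim Prod.snd Prod.snd
  set b : (K × L) ⊕ (K × L) → F := Sum.elim (fun _ => g) (fun _ => g')
  have hb : ∀ j, b j ≠ 0 := Sum.rec (fun _ => hg) fun _ => hg'
  by_contra hc0
  obtain ⟨i, hi⟩ := Function.ne_iff.mp hc0
  have hk {j} (hj : c j ≠ 0) : k j = k i :=
    column_eq_of_vecMul_eq_zero (selectionMatrix.hammingNorm_row_le_one k 1) hU hc
      hj (by simp [selectionMatrix.apply_self]) hi (by simp [selectionMatrix.apply_self])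
  have hl {j} (hj : c j ≠ 0) : l j = l i :=
    column_eq_of_vecMul_eq_zero (selectionMatrix.hammingNorm_row_le_one l b) hW hc
      hj (by simpa [selectionMatrix.apply_self] using hb j)
      hi (by simpa [selectionMatrix.apply_self] using hb i)
  have supp {j} (hj : c j ≠ 0) : j = .inl (k i, l i) ∨ j = .inr (k i, l i) := by
    rw [← hk hj, ← hl hj]
    rcases j with j | j
    · exact .inl rfl
    · exact .inr rfl
  have sum_eq (u : (K × L) ⊕ (K × L) → F) : ∑ j, c j * u j
      = c (.inl (k i, l i)) * u (.inl (k i, l i)) + c (.inr (k i, l i)) * u (.inr (k i, l i)) :=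
    Fintype.sum_eq_add _ _ Sum.inl_ne_inr fun j hj => by
      rw [not_imp_comm.mp supp (not_or.mpr hj), zero_mul]
  have eqU : c (.inl (k i, l i)) + c (.inr (k i, l i)) = 0 := by
    simpa [selectionMatrix, k] using (sum_eq _).symm.trans (congrFun hU (k i))
  have eqW : c (.inl (k i, l i)) * g + c (.inr (k i, l i)) * g' = 0 := by
    simpa [selectionMatrix, l, b] using (sum_eq _).symm.trans (congrFun hW (l i))
  have inl_eq_zero : c (.inl (k i, l i)) = 0 := by
    refine (mul_eq_zero.mp ?_).resolve_right (sub_ne_zero.mpr hgg')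
    linear_combination eqW - g' * eqU
  have inr_eq_zero : c (.inr (k i, l i)) = 0 := by rwa [inl_eq_zero, zero_add] at eqU
  rcases supp hi with h | h <;> rw [h] at hi <;> contradiction

lemma eq_zero_of_vecMul_fromRows_selectionMatrix_eq_zero
    [Semiring F] [NoZeroDivisors F] [Nontrivial F]
    {g : F} (hg : g ≠ 0) {c : (K × L) ⊕ L → F} (hc : hammingNorm c ≤ 3)
    (hU : c ᵥ* fromRows (selectionMatrix Prod.fst 1) (0 : Matrix L K F) = 0)
    (hW : c ᵥ* selectionMatrix (Sum.elim Prod.snd id) (Sum.elim (fun _ => g) 1) = 0) : c = 0 := by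
  set l : (K × L) ⊕ L → L := Sum.elim Prod.snd id
  set b : (K × L) ⊕ L → F := Sum.elim (fun _ => g) 1
  have hb : ∀ j, b j ≠ 0 := Sum.rec (fun _ => hg) fun _ => one_ne_zero
  have hWl (j) : selectionMatrix l b j (l j) ≠ 0 := by
    rw [selectionMatrix.apply_self]
    exact hb j
  have inl_eq_zero (x : K × L) : c (.inl x) = 0 := by
    by_contra hx
    obtain ⟨j, hjx, hj, hjk⟩ := exists_ne_of_vecMul_eq_zero (i := .inl x) (k := x.1) hU hx
      (by simp [selectionMatrix])
    have hl : l j = x.2 :=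
      column_eq_of_vecMul_eq_zero (selectionMatrix.hammingNorm_row_le_one l b) hW hc
        hj (hWl j) hx (hWl (.inl x))
    rcases j with y | y
    · have hk : y.1 = x.1 := selectionMatrix.eq_of_apply_ne_zero Prod.fst hjk
      exact hjx (congrArg Sum.inl (Prod.ext hk hl))
    · exact hjk rfl
  have inr_eq_zero (y : L) : c (.inr y) = 0 := by
    by_contra hy
    obtain ⟨j, hjy, hj, hjl⟩ := exists_ne_of_vecMul_eq_zero hW hy (hWl (.inr y))
    rcases j with x | z
    · exact hj (inl_eq_zero x)
    · exact hjy (congrArg Sum.inr (selectionMatrix.eq_of_apply_ne_zero l hjl))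
  funext j
  rcases j with x | y
  · exact inl_eq_zero x
  · exact inr_eq_zero y

end Juxtaposition

theorem statement12_general {R S K L F : Type*} [Fintype R] [Fintype S] [Fintype K] [Fintype L]
    [Field F] [Fintype F] [DecidableEq F] {A : R → K → F} {B : R → S → L → F}
    (hA : IsOA A (min 3 (Fintype.card K))) (hB : ∀ r, IsOA (B r) (min 3 (Fintype.card L))) :
    (∀ g g' : F, g ≠ 0 → g' ≠ 0 → g ≠ g' →
      IsOA (fun (p : R × S) (col : (K × L) ⊕ (K × L)) =>
        Sum.elim
          (fun kl => A p.1 kl.1 + g * B p.1 p.2 kl.2)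
          (fun kl => A p.1 kl.1 + g' * B p.1 p.2 kl.2)
          col) 3)
    ∧ (∀ g : F, g ≠ 0 →
      IsOA (fun (p : R × S) (col : (K × L) ⊕ L) =>
        Sum.elim
          (fun kl => A p.1 kl.1 + g * B p.1 p.2 kl.2)
          (fun l => B p.1 p.2 l)
          col) 3) := by
  classical
  refine ⟨fun g g' hg hg' hgg' => ?_, fun g hg => ?_⟩
  · convert isOA_mulVec_add_mulVec hA hB (selectionMatrix.hammingNorm_row_le_one _ _)
      (selectionMatrix.hammingNorm_row_le_one _ _)
      fun c => eq_zero_of_vecMul_selectionMatrix_eq_zero hg hg' hgg' using 3 with p col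
    rcases col with kl | kl <;> simp [selectionMatrix.mulVec_apply]
  · convert isOA_mulVec_add_mulVec hA hB (Sum.rec (selectionMatrix.hammingNorm_row_le_one _ _)
      fun _ => hammingNorm_zero.trans_le zero_le_one) (selectionMatrix.hammingNorm_row_le_one _ _)
      fun c => eq_zero_of_vecMul_fromRows_selectionMatrix_eq_zero hg using 3 with p col
    rcases col with kl | l <;> simp [selectionMatrix.mulVec_apply]

/-- Proposition 2: `A` is an `OA(s², 2, s, 2)`, each `Bᵢ` is an
`OA(n₂, m₂, s, 2)` if `m₂ = 2` or an `OA(n₂, m₂, s, 3)` if `m₂ ≥ 3`.  For `g` among the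
nonzero elements of `F` (i.e. `g = α_g`, `1 ≤ g ≤ s−1`), `D_g` has columns
`(k, l) : Fin 2 × Fin m₂` with entries `A i k + g·(Bᵢ) j l`, and `D_s = B`.
(i) for distinct nonzero `g, g'`, `(D_g, D_{g'})` is an `OA(s²n₂, 4m₂, s, 3)`;
(ii) for nonzero `g`, `(D_g, D_s)` is an `OA(s²n₂, 3m₂, s, 3)`. -/
theorem statement12 {F : Type} [Field F] [Fintype F] [DecidableEq F]
    {n2 m2 : ℕ} (hm2 : 2 ≤ m2)
    (A : Fin (Fintype.card F ^ 2) → Fin 2 → F) (hA : IsOA A 2)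
    (B : Fin (Fintype.card F ^ 2) → Fin n2 → Fin m2 → F)
    (hB2 : m2 = 2 → ∀ i, IsOA (B i) 2)
    (hB3 : 3 ≤ m2 → ∀ i, IsOA (B i) 3) :
    (∀ g g' : F, g ≠ 0 → g' ≠ 0 → g ≠ g' →
      IsOA (fun (p : Fin (Fintype.card F ^ 2) × Fin n2)
          (col : (Fin 2 × Fin m2) ⊕ (Fin 2 × Fin m2)) =>
        Sum.elim
          (fun kl => A p.1 kl.1 + g * B p.1 p.2 kl.2)
          (fun kl => A p.1 kl.1 + g' * B p.1 p.2 kl.2)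
          col) 3)
    ∧ (∀ g : F, g ≠ 0 →
      IsOA (fun (p : Fin (Fintype.card F ^ 2) × Fin n2)
          (col : (Fin 2 × Fin m2) ⊕ Fin m2) =>
        Sum.elim
          (fun kl => A p.1 kl.1 + g * B p.1 p.2 kl.2)
          (fun l => B p.1 p.2 l)
          col) 3) := by
  have hB : ∀ i, IsOA (B i) (min 3 (Fintype.card (Fin m2))) := by
    rcases hm2.eq_or_lt with rfl | h
    · exact hB2 rfl
    · simpa [Nat.succ_le_of_lt h] using hB3 h
  exact statement12_general (by simpa using hA) hB
end
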